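/- Let σ ∈ (1/2, 1) be fixed. There exists a constant C(σ) such that for every prime p and every real k > 0, one has Σ_{ν ≥ 0} d_{k/2}(p^ν)²/p^{2νσ} = I_0(k/p^σ)·exp(θ) for some real θ with |θ| ≤ C(σ)·k/p^{2σ}. -/

import Mathlib

open MeasureTheory Real

/-- The modified Bessel function of order 0: `I₀(t) = ∫₀¹ exp(t cos(2πθ)) dθ`. -/
noncomputable def besselI0 (t : ℝ) : ℝ :=
  ∫ θ in (0:ℝ)..1, Real.exp (t * Real.cos (2 * Real.pi * θ))

/-- The generalized divisor function at prime powers: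
`d_z(p^ν) = Γ(z+ν)/(Γ(z) ν!)`. -/
noncomputable def dzPow (z : ℝ) (ν : ℕ) : ℝ :=
  Real.Gamma (z + ν) / (Real.Gamma z * Nat.factorial ν)

theorem dz_coeff (z : ℝ) (hz : 0 < z) (n : ℕ) :
    ((dzPow z n : ℝ) : ℂ) = Ring.choose ((z : ℂ) + n - 1) n := by
  have h1 := Complex.Gamma_add_nat_div_Gamma_eq (n := n) (z : ℂ) (by
    intro k h
    have := congrArg Complex.re h
    simp at this
    have h2 : (0:ℝ) ≤ k := Nat.cast_nonneg k
    linarith)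
  have h2 := Ring.factorial_nsmul_multichoose_eq_ascPochhammer (z : ℂ) n
  rw [Polynomial.ascPochhammer_smeval_eq_eval] at h2
  rw [← Ring.multichoose_eq, dzPow]
  have hf : (n.factorial : ℂ) ≠ 0 := by exact_mod_cast Nat.factorial_ne_zero n
  rw [nsmul_eq_mul] at h2
  push_cast
  rw [← Complex.Gamma_ofReal, ← Complex.Gamma_ofReal, ← div_div]
  push_cast
  rw [h1, ← h2]
  field_simp

theorem dz_nonneg (z : ℝ) (hz : 0 < z) (n : ℕ) : 0 ≤ dzPow z n := by
  unfold dzPow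
  have := Real.Gamma_pos_of_pos hz
  have := Real.Gamma_pos_of_pos (show 0 < z + n by positivity)
  positivity

theorem dz_hasSum (z : ℝ) (hz : 0 < z) (w : ℂ) (hw : ‖w‖ < 1) :
    HasSum (fun n : ℕ => ((dzPow z n : ℝ) : ℂ) * w ^ n) (1 / (1 - w) ^ (z : ℂ)) := by
  have h := (Complex.one_div_one_sub_cpow_hasFPowerSeriesOnBall_zero (z : ℂ)).hasSum
    (y := w) (by
      rw [← ENNReal.ofReal_one, Metric.eball_ofReal]
      simpa using hw)
  simp only [zero_add] at h
  convert! h using 2 with n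
  rw [dz_coeff z hz]
  simp [FormalMultilinearSeries.ofScalars]

theorem dz_summable (z : ℝ) (hz : 0 < z) (x : ℝ) (hx0 : 0 ≤ x) (hx : x < 1) :
    Summable (fun n : ℕ => dzPow z n * x ^ n) := by
  have h := (dz_hasSum z hz (x : ℂ) (by simpa [abs_of_nonneg hx0] using hx)).summable
  exact_mod_cast h

theorem parseval_nat (a : ℕ → ℝ) (ha0 : ∀ n, 0 ≤ a n) (ha : Summable a) (f : ℝ → ℂ)
    (hf : ∀ t : ℝ, HasSum (fun n : ℕ => (a n : ℂ) *
      (Complex.exp (2 * π * Complex.I * t)) ^ n) (f t)) :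
    HasSum (fun n => a n ^ 2) (∫ t in (0:ℝ)..1, ‖f t‖ ^ 2) := by
  have hs : Summable (fun n : ℕ => (a n : ℂ) • (fourier (T := (1:ℝ)) (n : ℤ))) := by
    apply Summable.of_norm
    refine ha.congr fun n => ?_
    rw [norm_smul, fourier_norm]
    simp [abs_of_nonneg (ha0 n)]
  obtain ⟨F, hF⟩ := hs
  have hFf : ∀ t : ℝ, F (t : AddCircle (1:ℝ)) = f t := by
    intro t
    have h1 := (ContinuousMap.evalCLM ℂ (t : AddCircle (1:ℝ))).hasSum hF
    refine HasSum.unique h1 ?_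
    convert! hf t using 2 with n
    rw [ContinuousMap.evalCLM_apply, ContinuousMap.smul_apply, fourier_coe_apply, smul_eq_mul,
      ← Complex.exp_nat_mul]
    congr 2
    push_cast
    ring
  let L := ContinuousMap.toLp (E := ℂ) 2 (@AddCircle.haarAddCircle (1:ℝ) _) ℂ
  have h2 : HasSum (fun n : ℕ => (a n : ℂ) • fourierLp (T := (1:ℝ)) 2 (n : ℤ)) (L F) := by
    have := L.hasSum hF
    simpa [L, Function.comp_def] using this
  have hon : Orthonormal ℂ (fun n : ℕ => fourierLp (T := (1:ℝ)) 2 (n : ℤ)) :=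
    (orthonormal_fourier (T := (1:ℝ))).comp _ Nat.cast_injective
  have h3 : Filter.Tendsto (fun s : Finset ℕ =>
      inner ℂ (∑ n ∈ s, (a n : ℂ) • fourierLp (T := (1:ℝ)) 2 (n : ℤ))
        (∑ n ∈ s, (a n : ℂ) • fourierLp (T := (1:ℝ)) 2 (n : ℤ))) Filter.atTop
      (nhds (inner ℂ (L F) (L F))) := Filter.Tendsto.inner h2 h2
  have h4 : inner ℂ (L F) (L F) = ((∫ t in (0:ℝ)..1, ‖f t‖ ^ 2 : ℝ) : ℂ) := by
    rw [ContinuousMap.inner_toLp, AddCircle.integral_haarAddCircle,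
      ← AddCircle.intervalIntegral_preimage (1:ℝ) 0, ← intervalIntegral.integral_ofReal]
    simp [hFf, Complex.mul_conj, Complex.normSq_eq_norm_sq]
  rw [h4] at h3
  have h5 : HasSum (fun n => ((a n ^ 2 : ℝ) : ℂ)) ((∫ t in (0:ℝ)..1, ‖f t‖ ^ 2 : ℝ) : ℂ) := by
    refine h3.congr fun s => ?_
    rw [hon.inner_sum]
    refine Finset.sum_congr rfl fun n _ => ?_
    simp [sq]
  exact_mod_cast h5

theorem integrand_eq (z x t : ℝ) (hx0 : 0 < x) (hx : x ≤ 0.71) (hz : 0 < z) :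
    ∃ δ : ℝ, |δ| ≤ 2 * (2 * z) * x ^ 2 ∧
    ‖1 / (1 - (x : ℂ) * Complex.exp (2 * π * Complex.I * t)) ^ (z : ℂ)‖ ^ 2 =
      Real.exp (2 * z * x * Real.cos (2 * π * t)) * Real.exp δ := by
  set e := Complex.exp (2 * π * Complex.I * t) with he
  have hee : e = Complex.exp ((2 * π * t : ℝ) * Complex.I) := by
    rw [he]; push_cast; ring_nf
  have hen : ‖e‖ = 1 := by rw [hee, Complex.norm_exp_ofReal_mul_I]
  have hre : e.re = Real.cos (2 * π * t) := by rw [hee, Complex.exp_ofReal_mul_I_re]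
  have hwn : ‖(x : ℂ) * e‖ = x := by simp [hen, abs_of_pos hx0]
  have hw1 : ‖(x : ℂ) * e‖ < 1 := by rw [hwn]; linarith
  have hb := Complex.norm_log_one_sub_inv_sub_self_le hw1
  rw [hwn] at hb
  have hb2 := (Complex.abs_re_le_norm _).trans hb
  have hne : 1 - (x : ℂ) * e ≠ 0 := by
    intro h
    have : (x : ℂ) * e = 1 := (sub_eq_zero.mp h).symm
    rw [this] at hw1; simp at hw1
  have hpos : 0 < ‖1 - (x : ℂ) * e‖ := norm_pos_iff.mpr hne
  rw [Complex.sub_re, Complex.log_re, norm_inv, Real.log_inv, Complex.re_ofReal_mul, hre] at hb2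
  refine ⟨2 * z * (-Real.log ‖1 - (x : ℂ) * e‖ - x * Real.cos (2 * π * t)), ?_, ?_⟩
  · rw [abs_mul, abs_of_pos (by linarith : 0 < 2 * z)]
    have : x ^ 2 * (1 - x)⁻¹ / 2 ≤ 2 * x ^ 2 := by
      have h4 : (1 - x)⁻¹ ≤ 4 := by
        rw [inv_le_comm₀ (by linarith) (by norm_num)]; linarith
      nlinarith [sq_nonneg x]
    nlinarith [hb2.trans this]
  · rw [← Real.exp_add, norm_div, norm_one,
      Complex.norm_cpow_of_ne_zero hne]
    simp
    rw [Real.rpow_def_of_pos hpos, ← Real.exp_nat_mul, ← Real.exp_neg]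
    congr 1
    push_cast
    ring

theorem main_bound (z x : ℝ) (hx0 : 0 < x) (hx : x ≤ 0.71) (hz : 0 < z) :
    ∃ θ : ℝ, |θ| ≤ 2 * (2 * z) * x ^ 2 ∧
      (∑' n : ℕ, (dzPow z n * x ^ n) ^ 2) = besselI0 (2 * z * x) * Real.exp θ := by
  have hx1 : x < 1 := by linarith
  set f : ℝ → ℂ := fun t => 1 / (1 - (x : ℂ) * Complex.exp (2 * π * Complex.I * t)) ^ (z : ℂ)
    with hf
  have hP := parseval_nat (fun n => dzPow z n * x ^ n)
    (fun n => mul_nonneg (dz_nonneg z hz n) (by positivity))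
    (dz_summable z hz x hx0.le hx1) f (by
      intro t
      have hen : ‖Complex.exp (2 * π * Complex.I * t)‖ = 1 := by
        rw [show (2 * π * Complex.I * t : ℂ) = (2 * π * t : ℝ) * Complex.I by push_cast; ring,
          Complex.norm_exp_ofReal_mul_I]
      have := dz_hasSum z hz ((x : ℂ) * Complex.exp (2 * π * Complex.I * t))
        (by simpa [hen, abs_of_pos hx0] using hx1)
      convert! this using 2 with n
      push_cast
      ring)
  rw [hP.tsum_eq]
  set E := 2 * (2 * z) * x ^ 2 with hE
  set g : ℝ → ℝ := fun t => Real.exp (2 * z * x * Real.cos (2 * π * t)) with hg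
  have hgc : Continuous g := by fun_prop
  have hfc : Continuous fun t => ‖f t‖ ^ 2 := by
    have : Continuous f := by
      refine Continuous.div continuous_const ?_ ?_
      · refine Continuous.cpow (by fun_prop) continuous_const ?_
        intro t
        have hen : ‖Complex.exp (2 * π * Complex.I * t)‖ = 1 := by
          rw [show (2 * π * Complex.I * t : ℂ) = (2 * π * t : ℝ) * Complex.I by push_cast; ring,
            Complex.norm_exp_ofReal_mul_I]
        rw [sub_eq_add_neg]
        apply Complex.mem_slitPlane_of_norm_lt_one
        simpa [hen, abs_of_pos hx0] using hx1
      · intro t h0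
        obtain ⟨δ, _, h⟩ := integrand_eq z x t hx0 hx hz
        rw [h0] at h
        have : 0 < Real.exp (2 * z * x * Real.cos (2 * π * t)) * Real.exp δ := by positivity
        simp at h
    fun_prop
  have hub : ∀ t, ‖f t‖ ^ 2 ≤ g t * Real.exp E := by
    intro t
    obtain ⟨δ, hδ, h⟩ := integrand_eq z x t hx0 hx hz
    simp only [hf, hg]
    rw [h]
    gcongr
    exact (abs_le.mp hδ).2
  have hlb : ∀ t, g t * Real.exp (-E) ≤ ‖f t‖ ^ 2 := by
    intro t
    obtain ⟨δ, hδ, h⟩ := integrand_eq z x t hx0 hx hz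
    simp only [hf, hg]
    rw [h]
    gcongr
    exact (abs_le.mp hδ).1
  have hB : besselI0 (2 * z * x) = ∫ t in (0:ℝ)..1, g t := rfl
  have hBpos : 0 < besselI0 (2 * z * x) := by
    rw [hB]
    exact intervalIntegral.intervalIntegral_pos_of_pos (hgc.intervalIntegrable _ _)
      (fun t => Real.exp_pos _) one_pos
  have hU : (∫ t in (0:ℝ)..1, ‖f t‖ ^ 2) ≤ besselI0 (2 * z * x) * Real.exp E := by
    rw [hB, ← intervalIntegral.integral_mul_const]
    exact intervalIntegral.integral_mono zero_le_one (hfc.intervalIntegrable _ _)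
      ((hgc.mul continuous_const).intervalIntegrable _ _) hub
  have hL : besselI0 (2 * z * x) * Real.exp (-E) ≤ ∫ t in (0:ℝ)..1, ‖f t‖ ^ 2 := by
    rw [hB, ← intervalIntegral.integral_mul_const]
    exact intervalIntegral.integral_mono zero_le_one
      ((hgc.mul continuous_const).intervalIntegrable _ _) (hfc.intervalIntegrable _ _) hlb
  set S := ∫ t in (0:ℝ)..1, ‖f t‖ ^ 2 with hS
  have hSpos : 0 < S := lt_of_lt_of_le (by positivity) hL
  have hq : 0 < S / besselI0 (2 * z * x) := by positivity
  refine ⟨Real.log (S / besselI0 (2 * z * x)), ?_, ?_⟩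
  · rw [abs_le]
    constructor
    · rw [Real.le_log_iff_exp_le hq, le_div_iff₀ hBpos]; linarith
    · rw [Real.log_le_iff_le_exp hq, div_le_iff₀ hBpos]; linarith
  · rw [Real.exp_log hq]; field_simp

theorem stmt4 (σ : ℝ) (hσ : 1/2 < σ) (hσ1 : σ < 1) :
    ∃ C > (0:ℝ), ∀ p : ℕ, p.Prime → ∀ k : ℝ, 0 < k →
      ∃ θ : ℝ, |θ| ≤ C * k / (p:ℝ) ^ (2*σ) ∧
        (∑' ν : ℕ, dzPow (k/2) ν ^ 2 / (p:ℝ) ^ (2*(ν:ℝ)*σ))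
          = besselI0 (k / (p:ℝ) ^ σ) * Real.exp θ := by
  refine ⟨2, by norm_num, fun p hp k hk => ?_⟩
  have hp2 : (2:ℝ) ≤ p := by exact_mod_cast hp.two_le
  have hp0 : (0:ℝ) < p := by linarith
  have hY : 0 < (p:ℝ) ^ σ := Real.rpow_pos_of_pos hp0 _
  have hsq : ((p:ℝ) ^ σ) ^ 2 = (p:ℝ) ^ (2 * σ) := by
    rw [← Real.rpow_natCast, ← Real.rpow_mul hp0.le]; congr 1; push_cast; ring
  have hY2 : (2:ℝ) ≤ ((p:ℝ) ^ σ) ^ 2 := by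
    rw [hsq]
    calc (2:ℝ) ≤ p := hp2
      _ = (p:ℝ) ^ (1:ℝ) := (Real.rpow_one _).symm
      _ ≤ _ := Real.rpow_le_rpow_of_exponent_le (by linarith) (by linarith)
  have hx : ((p:ℝ) ^ σ)⁻¹ ≤ 0.71 := by
    rw [inv_le_comm₀ hY (by norm_num)]
    by_contra hcon
    push Not at hcon
    have : ((p:ℝ) ^ σ) ^ 2 < (0.71⁻¹ : ℝ) ^ 2 := by gcongr
    norm_num at this
    linarith
  obtain ⟨θ, h1, h2⟩ := main_bound (k/2) (((p:ℝ) ^ σ)⁻¹) (by positivity) hx (by positivity)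
  refine ⟨θ, ?_, ?_⟩
  · rw [← hsq]
    convert h1 using 1
    field_simp
  · rw [show k / (p:ℝ) ^ σ = 2 * (k/2) * ((p:ℝ) ^ σ)⁻¹ by field_simp, ← h2]
    refine tsum_congr fun n => ?_
    rw [show (2 * (n:ℝ) * σ) = (2 * σ) * n by ring, Real.rpow_mul hp0.le, ← hsq,
      Real.rpow_natCast]
    rw [mul_pow, inv_pow, inv_pow, ← pow_mul, ← pow_mul, mul_comm 2 n, div_eq_mul_inv]
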